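/- arXiv:2012.13511 — 3 statements merged into one kernel-verified Lean document; each statement's English description precedes it below -/
import Mathlib

section
/- Let n ≥ 2 be an integer and a ∈ ℂ, and let f_n(z) = z + a zⁿ. Then f_n ∈ S*_car if and only if |a| ≤ 1/(2n − 1). -/
open Complex Metric

def omegaCar : Set ℂ := {w : ℂ | ∃ u : ℂ, ‖u‖ < 1 ∧ w = 1 + u + u ^ 2 / 2}

def SCar (f : ℂ → ℂ) : Prop :=
  DifferentiableOn ℂ f (Metric.ball (0 : ℂ) 1) ∧ f 0 = 0 ∧ deriv f 0 = 1 ∧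
    (∀ z : ℂ, ‖z‖ < 1 → z ≠ 0 → f z ≠ 0) ∧
    (∀ z : ℂ, ‖z‖ < 1 → z ≠ 0 → z * deriv f z / f z ∈ omegaCar)

/-!
Since `1 + u + u ^ 2 / 2 = ((1 + u) ^ 2 + 1) / 2`, a point `w` lies in `omegaCar` iff `2 * w - 1`
has a square root `p` with `‖p - 1‖ < 1`. Hence `omegaCar` contains the disk `‖w - 1‖ < 1 / 2`, but
not its boundary point `1 / 2`, because `w = 1 / 2` forces `p = 0`.

For `f z = z + a * z ^ (k + 1)` and `t = a * z ^ k`, one has `z * f' z / f z = 1 + k * t / (1 + t)`.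
If `‖t‖ < 1 / (2 * k + 1)`, this lies in the above disk; at `t = -1 / (2 * k + 1)` it equals
`1 / 2`, and `t` attains this value in the unit disk as soon as `1 / (2 * k + 1) < ‖a‖`.
-/

lemma mem_omegaCar_iff_exists_sq_eq {w : ℂ} :
    w ∈ omegaCar ↔ ∃ p : ℂ, ‖p - 1‖ < 1 ∧ p ^ 2 = 2 * w - 1 := by
  constructor
  · rintro ⟨u, hu, rfl⟩
    exact ⟨1 + u, by simpa using hu, by ring⟩
  · rintro ⟨p, hp, hsq⟩
    exact ⟨p - 1, hp, by linear_combination (-1 / 2 : ℂ) * hsq⟩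

lemma norm_sub_one_le_norm_sq_sub_one {p : ℂ} (hp : 0 ≤ p.re) : ‖p - 1‖ ≤ ‖p ^ 2 - 1‖ := by
  have one_le : 1 ≤ ‖p + 1‖ := by
    have := re_le_norm (p + 1)
    rw [add_re, one_re] at this
    linarith
  calc ‖p - 1‖ ≤ ‖p + 1‖ * ‖p - 1‖ := le_mul_of_one_le_left (norm_nonneg _) one_le
    _ = ‖p ^ 2 - 1‖ := by rw [← norm_mul]; ring_nf

lemma ball_one_half_subset_omegaCar : ball 1 (1 / 2) ⊆ omegaCar := by
  intro w hw
  rw [mem_ball, dist_eq_norm] at hw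
  obtain ⟨p, hsq, hre⟩ : ∃ p : ℂ, p ^ 2 = 2 * w - 1 ∧ 0 ≤ p.re :=
    ⟨(2 * w - 1) ^ (2⁻¹ : ℂ), cpow_ofNat_inv_pow _ 2, cpow_inv_two_re _ ▸ Real.sqrt_nonneg _⟩
  refine mem_omegaCar_iff_exists_sq_eq.2 ⟨p, ?_, hsq⟩
  calc ‖p - 1‖ ≤ ‖p ^ 2 - 1‖ := norm_sub_one_le_norm_sq_sub_one hre
    _ = ‖2 * (w - 1)‖ := by rw [hsq]; ring_nf
    _ < 1 := by rw [norm_mul, norm_ofNat]; linarith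

lemma one_half_notMem_omegaCar : (1 / 2 : ℂ) ∉ omegaCar := by
  intro h
  obtain ⟨p, hp, hsq⟩ := mem_omegaCar_iff_exists_sq_eq.1 h
  obtain rfl : p = 0 := by simpa using hsq
  simp at hp

lemma one_add_mul_div_one_add_mem_ball {𝕜 : Type*} [NormedField 𝕜] {c t : 𝕜}
    (h : ‖t‖ < (2 * ‖c‖ + 1)⁻¹) : 1 + c * t / (1 + t) ∈ ball (1 : 𝕜) (1 / 2) := by
  have hle : 1 - ‖t‖ ≤ ‖1 + t‖ := by simpa using norm_sub_le_norm_add (1 : 𝕜) t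
  have hlt : 2 * (‖c‖ * ‖t‖) < ‖1 + t‖ := by
    rw [← one_div, lt_div_iff₀ (by positivity)] at h
    linarith
  have hpos : 0 < ‖1 + t‖ := lt_of_le_of_lt (by positivity) hlt
  rw [mem_ball, dist_eq_norm, add_sub_cancel_left, norm_div, norm_mul, div_lt_iff₀ hpos]
  linarith

lemma one_add_mul_div_one_add_eq_one_half {K : Type*} [Field K] {c t : K} (hc : 2 * c ≠ 0)
    (h : (2 * c + 1) * t = -1) : 1 + c * t / (1 + t) = 1 / 2 := by
  have h2 : (2 : K) ≠ 0 := left_ne_zero_of_mul hc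
  have hc0 : c ≠ 0 := right_ne_zero_of_mul hc
  have ht0 : t ≠ 0 := right_ne_zero_of_mul (h ▸ neg_ne_zero.2 one_ne_zero)
  have denom_eq : 1 + t = -(2 * c * t) := by linear_combination h
  rw [denom_eq]
  field_simp
  ring

lemma norm_mul_pow_lt {R : Type*} [SeminormedRing R] {a z : R} {r : ℝ} {k : ℕ} (hk : k ≠ 0)
    (hr : 0 < r) (ha : ‖a‖ ≤ r) (hz : ‖z‖ < 1) : ‖a * z ^ k‖ < r :=
  calc ‖a * z ^ k‖ ≤ ‖a‖ * ‖z‖ ^ k :=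
        (norm_mul_le _ _).trans (by gcongr; exact norm_pow_le' z (Nat.pos_of_ne_zero hk))
    _ ≤ r * ‖z‖ ^ k := by gcongr
    _ < r := mul_lt_of_lt_one_right hr (pow_lt_one₀ (norm_nonneg z) hz hk)

lemma exists_norm_lt_one_and_mul_pow_eq {𝕜 : Type*} [NormedField 𝕜] [IsAlgClosed 𝕜] {a t : 𝕜}
    {k : ℕ} (hk : k ≠ 0) (h : ‖t‖ < ‖a‖) : ∃ z : 𝕜, ‖z‖ < 1 ∧ a * z ^ k = t := by
  have ha : 0 < ‖a‖ := (norm_nonneg t).trans_lt h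
  obtain ⟨z, hz⟩ := IsAlgClosed.exists_pow_nat_eq (t / a) (Nat.pos_of_ne_zero hk)
  refine ⟨z, ?_, by rw [hz, mul_div_cancel₀ _ (norm_pos_iff.1 ha)]⟩
  rwa [← pow_lt_one_iff_of_nonneg (norm_nonneg z) hk, ← norm_pow, hz, norm_div, div_lt_one ha]

lemma deriv_add_mul_pow_succ {𝕜 : Type*} [NontriviallyNormedField 𝕜] (a : 𝕜) (k : ℕ) (z : 𝕜) :
    deriv (fun w : 𝕜 => w + a * w ^ (k + 1)) z = 1 + (k + 1) * (a * z ^ k) := by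
  have h := (hasDerivAt_id' z).fun_add ((hasDerivAt_pow (k + 1) z).const_mul a)
  simpa [mul_left_comm] using h.deriv

lemma add_mul_pow_succ_eq_mul {R : Type*} [CommSemiring R] (a z : R) (k : ℕ) :
    z + a * z ^ (k + 1) = z * (1 + a * z ^ k) := by
  ring

lemma add_mul_pow_succ_ne_zero_iff {R : Type*} [CommSemiring R] [NoZeroDivisors R] {a z : R}
    {k : ℕ} (hz : z ≠ 0) :
    z + a * z ^ (k + 1) ≠ 0 ↔ 1 + a * z ^ k ≠ 0 := by
  rw [add_mul_pow_succ_eq_mul, mul_ne_zero_iff_left hz]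

lemma mul_deriv_div_add_mul_pow_succ {𝕜 : Type*} [NontriviallyNormedField 𝕜] {a z : 𝕜} {k : ℕ}
    (hz : z ≠ 0) (h : 1 + a * z ^ k ≠ 0) :
    z * deriv (fun w : 𝕜 => w + a * w ^ (k + 1)) z / (z + a * z ^ (k + 1)) =
      1 + k * (a * z ^ k) / (1 + a * z ^ k) := by
  rw [deriv_add_mul_pow_succ, add_mul_pow_succ_eq_mul, mul_div_mul_left _ _ hz]
  field_simp
  ring

lemma sCar_add_mul_pow_succ_iff {a : ℂ} {k : ℕ} (hk : k ≠ 0) :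
    SCar (fun z : ℂ => z + a * z ^ (k + 1)) ↔
      ∀ z : ℂ, ‖z‖ < 1 → z ≠ 0 →
        1 + a * z ^ k ≠ 0 ∧ 1 + k * (a * z ^ k) / (1 + a * z ^ k) ∈ omegaCar := by
  constructor
  · rintro ⟨-, -, -, hne, hmem⟩ z hz hz0
    have h : 1 + a * z ^ k ≠ 0 := (add_mul_pow_succ_ne_zero_iff hz0).1 (hne z hz hz0)
    exact ⟨h, mul_deriv_div_add_mul_pow_succ hz0 h ▸ hmem z hz hz0⟩
  · intro H
    refine ⟨by fun_prop, by simp, by simp [deriv_add_mul_pow_succ, hk], fun z hz hz0 => ?_,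
      fun z hz hz0 => ?_⟩
    · exact (add_mul_pow_succ_ne_zero_iff hz0).2 (H z hz hz0).1
    · exact mul_deriv_div_add_mul_pow_succ hz0 (H z hz hz0).1 ▸ (H z hz hz0).2

lemma sCar_add_mul_pow_succ_of_norm_le {a : ℂ} {k : ℕ} (hk : k ≠ 0)
    (ha : ‖a‖ ≤ (2 * (k : ℝ) + 1)⁻¹) : SCar (fun z : ℂ => z + a * z ^ (k + 1)) := by
  refine (sCar_add_mul_pow_succ_iff hk).2 fun z hz _ => ?_
  have ht : ‖a * z ^ k‖ < (2 * ‖(k : ℂ)‖ + 1)⁻¹ := by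
    rw [norm_natCast]
    exact norm_mul_pow_lt hk (by positivity) ha hz
  refine ⟨fun h => ?_, ball_one_half_subset_omegaCar (one_add_mul_div_one_add_mem_ball ht)⟩
  rw [eq_neg_of_add_eq_zero_right h, norm_neg, norm_one] at ht
  exact ht.not_ge (inv_le_one_of_one_le₀ (le_add_of_nonneg_left (by positivity)))

lemma norm_le_of_sCar_add_mul_pow_succ {a : ℂ} {k : ℕ} (hk : k ≠ 0)
    (h : SCar (fun z : ℂ => z + a * z ^ (k + 1))) : ‖a‖ ≤ (2 * (k : ℝ) + 1)⁻¹ := by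
  by_contra! ha
  have hk0 : 2 * (k : ℂ) ≠ 0 := mul_ne_zero two_ne_zero (Nat.cast_ne_zero.2 hk)
  have hnorm : ‖(-1 : ℂ)‖ < ‖(2 * (k : ℂ) + 1) * a‖ := by
    have hk1 : ‖2 * (k : ℂ) + 1‖ = 2 * k + 1 := by exact_mod_cast norm_natCast (2 * k + 1)
    rwa [norm_neg, norm_one, norm_mul, hk1, ← inv_lt_iff_one_lt_mul₀' (by positivity)]
  obtain ⟨z, hz, ht⟩ := exists_norm_lt_one_and_mul_pow_eq hk hnorm
  have hz0 : z ≠ 0 := by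
    rintro rfl
    simp [hk] at ht
  have hmem := ((sCar_add_mul_pow_succ_iff hk).1 h z hz hz0).2
  rw [one_add_mul_div_one_add_eq_one_half hk0 (by rwa [← mul_assoc])] at hmem
  exact one_half_notMem_omegaCar hmem

theorem stmt_13 (n : ℕ) (hn : 2 ≤ n) (a : ℂ) :
    SCar (fun z : ℂ => z + a * z ^ n) ↔ ‖a‖ ≤ 1 / (2 * (n : ℝ) - 1) := by
  obtain ⟨k, rfl⟩ : ∃ k, n = k + 1 := ⟨n - 1, by omega⟩
  have hk : k ≠ 0 := by omega
  have bound_eq : 1 / (2 * ((k + 1 : ℕ) : ℝ) - 1) = (2 * (k : ℝ) + 1)⁻¹ := by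
    push_cast
    ring_nf
  rw [bound_eq]
  exact ⟨norm_le_of_sCar_add_mul_pow_succ hk, sCar_add_mul_pow_succ_of_norm_le hk⟩
end

section
/- Let f be analytic on 𝔻 with f(0) = 0, f'(0) = 1, let a₂ = f''(0)/2, and let f₂(z) = z + a₂ z². (1) If f is convex (f'(z) ≠ 0 and Re(1 + z f''(z)/f'(z)) > 0 on 𝔻), then z ↦ f₂(ρz)/ρ = z + a₂ρ z² belongs to S*_car for every 0 < ρ ≤ 1/3. (2) If f is univalent on 𝔻, then z ↦ f₂(ρz)/ρ belongs to S*_car for every 0 < ρ ≤ 1/6. -/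
open Complex Metric

/-!
Since `2 * w - 1 = (1 + u) ^ 2` for `w = 1 + u + u ^ 2 / 2`, the domain `omegaCar` is the inside of
a cardioid in the variable `2 * w - 1`, and it contains the disk `|w - 7 / 8| < 3 / 8`, which is
the image of `|ζ| < 1 / 3` under `ζ ↦ (1 + 2 * ζ) / (1 + ζ)`. Hence `z + c * z ^ 2` lies in the
class as soon as `|c| ≤ 1 / 3`, and the theorem reduces to the coefficient bounds `|a₂| ≤ 1` for
convex functions and `|a₂| ≤ 2` for univalent ones.

The first is the Schwarz lemma for the Cayley transform of `1 + z * f'' / f'`. The second is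
Bieberbach's: the square-root transform of `f` is the reciprocal of a univalent function
`G z = z⁻¹ + φ z` with `φ' 0 = - a₂ / 2`, and the area theorem gives `|φ' 0| ≤ 1`. For the area
theorem no Jordan curve is needed: with `b = φ' 0`, the real-linear map
`w ↦ w - b * s ^ 2 * conj w` straightens the ellipse-like curve `G '' {|z| = s}` into a circle up
to `O(s ^ 2)`, so that `G '' {s < |z| ≤ r}` has area at most
`π * (s⁻¹ + O(s ^ 2)) ^ 2 / (1 - |b| ^ 2 * s ^ 4)`. Comparing this with the area obtained by
integrating `|G'| ^ 2` in polar coordinates and letting `s → 0` gives `|b| ^ 2 * r ^ 2 ≤ r⁻¹ ^ 2`.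
-/

section

open Set Filter MeasureTheory Real
open scoped ComplexConjugate Topology

theorem deriv_dslope_self {𝕜 : Type*} [RCLike 𝕜] {f : 𝕜 → 𝕜} {c : 𝕜} (hf : AnalyticAt 𝕜 f c) :
    deriv (dslope f c) c = deriv (deriv f) c / 2 := by
  have := hf.hasFPowerSeriesAt.has_fpower_series_dslope_fslope.deriv
  rw [this]
  simp [FormalMultilinearSeries.coeff_ofScalars, iteratedDeriv_succ]

theorem exists_norm_sub_sub_le_mul_sq {f : ℂ → ℂ} {U K : Set ℂ} {c : ℂ} (hU : U ∈ 𝓝 c)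
    (hf : DifferentiableOn ℂ f U) (hK : IsCompact K) (hKU : K ⊆ U) :
    ∃ C, 0 ≤ C ∧ ∀ z ∈ K, ‖f z - f c - (z - c) * deriv f c‖ ≤ C * ‖z - c‖ ^ 2 := by
  have hd : DifferentiableOn ℂ (dslope (dslope f c) c) U :=
    (differentiableOn_dslope hU).2 ((differentiableOn_dslope hU).2 hf)
  obtain ⟨C, hC⟩ := hK.exists_bound_of_continuousOn (hd.continuousOn.mono hKU)
  refine ⟨max C 0, le_max_right _ _, fun z hz ↦ ?_⟩
  have h1 : (z - c) * dslope f c z = f z - f c := sub_smul_dslope f c z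
  have h2 : (z - c) * dslope (dslope f c) c z = dslope f c z - deriv f c := by
    rw [← dslope_same f c]
    exact sub_smul_dslope _ c z
  have expand : f z - f c - (z - c) * deriv f c = dslope (dslope f c) c z * (z - c) ^ 2 := by
    linear_combination -h1 - (z - c) * h2
  rw [expand, norm_mul, norm_pow]
  gcongr
  exact (hC z hz).trans (le_max_left _ _)

theorem exists_differentiableOn_pow_eq {U : Set ℂ} (hUc : IsSimplyConnected U) (hUo : IsOpen U)
    {g : ℂ → ℂ} (hg : DifferentiableOn ℂ g U) (hg₀ : ∀ z ∈ U, g z ≠ 0) {n : ℕ} (hn : n ≠ 0)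
    {z₀ w₀ : ℂ} (hz₀ : z₀ ∈ U) (hw₀ : w₀ ^ n = g z₀) :
    ∃ q : ℂ → ℂ, DifferentiableOn ℂ q U ∧ q z₀ = w₀ ∧ ∀ z, q z ^ n = g z := by
  obtain ⟨q, hq_cont, hq_pow⟩ := exists_continuousOn_pow_eq hUc hUo hg.continuousOn
    (by rintro ⟨z, hz, hgz⟩; exact hg₀ z hz hgz) hn
  have hq₀ (z : ℂ) (hz : z ∈ U) : q z ≠ 0 := by
    rw [← pow_ne_zero_iff hn, hq_pow]
    exact hg₀ z hz
  have hq_diff : DifferentiableOn ℂ q U := fun z hz ↦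
    ((hasDerivAt_pow n (q z)).of_comp_left (hq_cont.continuousAt (hUo.mem_nhds hz))
      (hg.differentiableAt (hUo.mem_nhds hz)).hasDerivAt
      (mul_ne_zero (Nat.cast_ne_zero.2 hn) (pow_ne_zero _ (hq₀ z hz)))
      (.of_forall hq_pow)).differentiableAt.differentiableWithinAt
  refine ⟨fun z ↦ w₀ / q z₀ * q z, hq_diff.const_mul _, div_mul_cancel₀ _ (hq₀ z₀ hz₀),
    fun z ↦ ?_⟩
  rw [mul_pow, div_pow, hw₀, hq_pow, hq_pow, div_self (hg₀ z₀ hz₀), one_mul]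

theorem isSimplyConnected_ball (c : ℂ) {R : ℝ} (hR : 0 < R) : IsSimplyConnected (ball c R) := by
  have := (convex_ball c R).contractibleSpace (nonempty_ball.2 hR)
  exact SimplyConnectedSpace.ofContractible _

/-! ### Areas of images and integrals over annuli -/

theorem measureReal_image_eq_integral_norm_deriv_sq {f f' : ℂ → ℂ} {s : Set ℂ}
    (hs : MeasurableSet s) (hf : ∀ z ∈ s, HasDerivWithinAt f (f' z) s z) (hinj : InjOn f s) :
    volume.real (f '' s) = ∫ z in s, ‖f' z‖ ^ 2 := by
  have hdet (c : ℂ) :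
      ((ContinuousLinearMap.toSpanSingleton ℂ c).restrictScalars ℝ).det = ‖c‖ ^ 2 := by
    simp [ContinuousLinearMap.det, LinearMap.det_restrictScalars, Algebra.norm_complex_eq,
      normSq_eq_norm_sq]
  have := integral_image_eq_integral_abs_det_fderiv_smul volume hs
    (fun z hz ↦ (hf z hz).hasFDerivWithinAt.restrictScalars ℝ) hinj fun _ ↦ (1 : ℝ)
  simpa [hdet] using this

theorem measureReal_image_sub_mul_conj (c : ℂ) (s : Set ℂ) :
    volume.real ((fun w ↦ w - c * conj w) '' s) = |1 - ‖c‖ ^ 2| * volume.real s := by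
  let T : ℂ →ₗ[ℝ] ℂ := LinearMap.id - LinearMap.mulLeft ℝ c ∘ₗ conjAe.toLinearMap
  have hdet : T.det = 1 - ‖c‖ ^ 2 := by
    rw [← LinearMap.det_toMatrix basisOneI, Matrix.det_fin_two]
    simp [T, LinearMap.toMatrix_apply, Complex.sq_norm, normSq_apply]
    ring
  have himage : (fun w ↦ w - c * conj w) '' s = T '' s := rfl
  rw [himage, measureReal_def, Measure.addHaar_image_linearMap, hdet, ENNReal.toReal_mul,
    ENNReal.toReal_ofReal (abs_nonneg _), measureReal_def]

theorem measureReal_le_of_norm_sub_mul_conj_le {c : ℂ} {S : Set ℂ} {M : ℝ} (hM : 0 ≤ M)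
    (hS : ∀ w ∈ S, ‖w - c * conj w‖ ≤ M) : (1 - ‖c‖ ^ 2) * volume.real S ≤ π * M ^ 2 := by
  have hsub : (fun w ↦ w - c * conj w) '' S ⊆ closedBall 0 M := by
    rintro _ ⟨w, hw, rfl⟩
    simpa using hS w hw
  calc (1 - ‖c‖ ^ 2) * volume.real S ≤ |1 - ‖c‖ ^ 2| * volume.real S := by
        gcongr
        exact le_abs_self _
    _ = volume.real ((fun w ↦ w - c * conj w) '' S) := (measureReal_image_sub_mul_conj c S).symm
    _ ≤ volume.real (closedBall (0 : ℂ) M) :=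
        measureReal_mono hsub measure_closedBall_lt_top.ne
    _ = π * M ^ 2 := by
        simp [measureReal_def, hM, mul_comm]

theorem integral_annulus_eq_integral_circleMap {E : Type*} [NormedAddCommGroup E]
    [NormedSpace ℝ E] (g : ℂ → E) (c : ℂ) {s : ℝ} (hs : 0 ≤ s) (r : ℝ) :
    ∫ z in closedBall c r \ closedBall c s, g z =
      ∫ p in Ioc s r ×ˢ Ioo (-π) π, p.1 • g (circleMap c p.1 p.2) := by
  set A := closedBall c r \ closedBall c s
  have hA : MeasurableSet A := measurableSet_closedBall.diff measurableSet_closedBall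
  have hpolar (p : ℝ × ℝ) : c + Complex.polarCoord.symm p = circleMap c p.1 p.2 := by
    rw [Complex.polarCoord_symm_apply, circleMap, Complex.exp_mul_I, ofReal_cos, ofReal_sin]
  have hindicator : EqOn (fun p : ℝ × ℝ ↦ p.1 • A.indicator g (c + Complex.polarCoord.symm p))
      ((Ioc s r ×ˢ univ).indicator fun p ↦ p.1 • g (circleMap c p.1 p.2))
      polarCoord.target := by
    intro p hp
    have hp1 : 0 < p.1 := hp.1
    have hmem : circleMap c p.1 p.2 ∈ A ↔ p ∈ Ioc s r ×ˢ (univ : Set ℝ) := by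
      simp [A, circleMap, abs_of_pos hp1, and_comm]
    by_cases h : p ∈ Ioc s r ×ˢ (univ : Set ℝ)
    · simp only [hpolar, indicator_of_mem h, indicator_of_mem (hmem.2 h)]
    · simp only [hpolar, indicator_of_notMem h, indicator_of_notMem (mt hmem.1 h), smul_zero]
  have htarget : polarCoord.target ∩ Ioc s r ×ˢ univ = Ioc s r ×ˢ Ioo (-π) π := by
    ext p
    simp only [polarCoord_target, mem_inter_iff, mem_prod, mem_Ioi, mem_Ioc, mem_univ, and_true]
    exact ⟨fun h ↦ ⟨h.2, h.1.2⟩, fun h ↦ ⟨⟨hs.trans_lt h.1.1, h.2⟩, h.1⟩⟩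
  calc ∫ z in A, g z = ∫ z, A.indicator g (c + z) := by
        rw [integral_add_left_eq_self, integral_indicator hA]
    _ = ∫ p in polarCoord.target, p.1 • A.indicator g (c + Complex.polarCoord.symm p) :=
        (Complex.integral_comp_polarCoord_symm _).symm
    _ = ∫ p in Ioc s r ×ˢ Ioo (-π) π, p.1 • g (circleMap c p.1 p.2) := by
        rw [setIntegral_congr_fun polarCoord.open_target.measurableSet hindicator,
          setIntegral_indicator (measurableSet_Ioc.prod .univ), htarget]

theorem integral_annulus_eq_integral_circleAverage {E : Type*} [NormedAddCommGroup E]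
    [NormedSpace ℝ E] {g : ℂ → E} {c : ℂ} {s r : ℝ} (hs : 0 ≤ s) (hsr : s ≤ r)
    (hg : ContinuousOn g (closedBall c r \ ball c s)) :
    ∫ z in closedBall c r \ closedBall c s, g z =
      (2 * π) • ∫ ρ in s..r, ρ • circleAverage g c ρ := by
  have hcont : ContinuousOn (fun p : ℝ × ℝ ↦ p.1 • g (circleMap c p.1 p.2))
      (Icc s r ×ˢ Icc (-π) π) := by
    refine continuousOn_fst.smul (hg.comp (f := fun p : ℝ × ℝ ↦ circleMap c p.1 p.2) ?_ ?_)
    · unfold circleMap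
      fun_prop
    · rintro p ⟨⟨h1, h2⟩, -⟩
      simp [circleMap, abs_of_nonneg (hs.trans h1), h1, h2]
  have hangle (ρ : ℝ) : ∫ θ in Ioo (-π) π, ρ • g (circleMap c ρ θ) =
      (2 * π) • ρ • circleAverage g c ρ := by
    rw [circleAverage_eq_integral_add (-π), ← integral_Ioc_eq_integral_Ioo,
      ← intervalIntegral.integral_of_le (by linarith [pi_pos]), intervalIntegral.integral_smul,
      smul_comm ρ, smul_inv_smul₀ two_pi_pos.ne',
      intervalIntegral.integral_comp_add_right (fun θ ↦ g (circleMap c ρ θ))]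
    ring_nf
  rw [integral_annulus_eq_integral_circleMap g c hs r, Measure.volume_eq_prod,
    setIntegral_prod _ ((hcont.integrableOn_compact (isCompact_Icc.prod isCompact_Icc)).mono_set
      (prod_mono Ioc_subset_Icc_self Ioo_subset_Icc_self))]
  simp only [hangle, integral_smul, intervalIntegral.integral_of_le hsr]

theorem norm_circleAverage_le_circleAverage_norm {E : Type*} [NormedAddCommGroup E]
    [NormedSpace ℝ E] (f : ℂ → E) (c : ℂ) (R : ℝ) :
    ‖circleAverage f c R‖ ≤ circleAverage (fun z ↦ ‖f z‖) c R := by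
  rw [circleAverage_def, circleAverage_def, norm_smul, Real.norm_of_nonneg (by positivity),
    smul_eq_mul]
  gcongr
  exact intervalIntegral.norm_integral_le_integral_norm two_pi_pos.le

theorem norm_sq_le_circleAverage_norm_sq {p : ℂ → ℂ} {c : ℂ} {R : ℝ}
    (hp : DiffContOnCl ℂ p (ball c |R|)) :
    ‖p c‖ ^ 2 ≤ circleAverage (fun z ↦ ‖p z‖ ^ 2) c R := by
  have := norm_circleAverage_le_circleAverage_norm (fun z ↦ p z • p z) c R
  rw [(hp.smul hp).circleAverage] at this
  simpa [sq] using this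

theorem add_norm_sq_le_circleAverage_norm_sq_sub_inv_sq {p : ℂ → ℂ} {ρ : ℝ} (hρ : 0 < ρ)
    (hp : DiffContOnCl ℂ p (ball 0 ρ)) :
    (ρ ^ 4)⁻¹ + ‖p 0‖ ^ 2 ≤ circleAverage (fun z ↦ ‖p z - (z ^ 2)⁻¹‖ ^ 2) 0 ρ := by
  rw [← abs_of_pos hρ] at hp
  have hq : DiffContOnCl ℂ (fun z ↦ z ^ 2 * p z) (ball 0 |ρ|) :=
    (differentiable_pow 2).diffContOnCl.smul hp
  have hcont {f : ℂ → ℂ} (hf : DiffContOnCl ℂ f (ball 0 |ρ|)) : ContinuousOn f (sphere 0 |ρ|) :=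
    hf.continuousOn_ball.mono sphere_subset_closedBall
  have hcross : circleAverage (fun z ↦ (z ^ 2 * p z).re) 0 ρ = 0 := by
    have := reCLM.circleAverage_comp_comm (hcont hq).circleIntegrable'
    simpa [hq.circleAverage, Function.comp_def] using this
  have hexpand : EqOn (fun z ↦ ‖p z - (z ^ 2)⁻¹‖ ^ 2)
      (fun z ↦ (ρ ^ 4)⁻¹ + ‖p z‖ ^ 2 - (2 * (ρ ^ 4)⁻¹) • (z ^ 2 * p z).re) (sphere 0 |ρ|) := by
    intro z hz
    have hz' : ‖z‖ = ρ := by rwa [mem_sphere_zero_iff_norm, abs_of_pos hρ] at hz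
    have hconj : conj (z ^ 2)⁻¹ = ((ρ ^ 4)⁻¹ : ℝ) * z ^ 2 := by
      rw [← hz', Complex.inv_def, map_mul, conj_conj, conj_ofReal, normSq_eq_norm_sq, norm_pow,
        ← pow_mul, mul_comm]
    have hre : (p z * conj (z ^ 2)⁻¹).re = (ρ ^ 4)⁻¹ * (z ^ 2 * p z).re := by
      rw [hconj, ← re_ofReal_mul]
      ring_nf
    dsimp only
    rw [Complex.sq_norm, normSq_sub, hre, normSq_eq_norm_sq, normSq_eq_norm_sq, norm_inv, norm_pow,
      hz', smul_eq_mul]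
    ring
  have hi1 : CircleIntegrable (fun z ↦ ‖p z‖ ^ 2) 0 ρ := ((hcont hp).norm.pow 2).circleIntegrable'
  have hi2 : CircleIntegrable (fun z ↦ (z ^ 2 * p z).re) 0 ρ :=
    (continuous_re.comp_continuousOn (hcont hq)).circleIntegrable'
  have hconst : CircleIntegrable (fun _ ↦ (ρ ^ 4)⁻¹) 0 ρ := circleIntegrable_const _ _ _
  rw [circleAverage_congr_sphere hexpand,
    circleAverage_fun_sub (hconst.fun_add hi1) hi2.const_fun_smul,
    circleAverage_fun_add hconst hi1, circleAverage_fun_smul, hcross, smul_zero, sub_zero,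
    circleAverage_const]
  gcongr
  exact norm_sq_le_circleAverage_norm_sq hp

/-! ### The area theorem -/

theorem continuousOn_mul_inv_pow_four_add (b : ℝ) :
    ContinuousOn (fun ρ : ℝ ↦ ρ * ((ρ ^ 4)⁻¹ + b)) {0}ᶜ :=
  continuousOn_id.mul
    (((continuousOn_pow 4).inv₀ fun _ hρ ↦ pow_ne_zero 4 hρ).add continuousOn_const)

theorem integral_mul_inv_pow_four_add {s r : ℝ} (hs : 0 < s) (hsr : s ≤ r) (b : ℝ) :
    ∫ ρ in s..r, ρ * ((ρ ^ 4)⁻¹ + b) = ((s ^ 2)⁻¹ - (r ^ 2)⁻¹ + b * (r ^ 2 - s ^ 2)) / 2 := by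
  have hne (ρ : ℝ) (hρ : ρ ∈ uIcc s r) : ρ ≠ 0 :=
    (hs.trans_le (uIcc_of_le hsr ▸ hρ).1).ne'
  have hprimitive (ρ : ℝ) (hρ : ρ ∈ uIcc s r) :
      HasDerivAt (fun ρ : ℝ ↦ (b * ρ ^ 2 - (ρ ^ 2)⁻¹) / 2) (ρ * ((ρ ^ 4)⁻¹ + b)) ρ := by
    have := hne ρ hρ
    convert! (((hasDerivAt_pow 2 ρ).const_mul b).fun_sub
      ((hasDerivAt_pow 2 ρ).fun_inv (pow_ne_zero 2 this))).div_const 2 using 1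
    field_simp
    ring
  rw [intervalIntegral.integral_eq_sub_of_hasDerivAt hprimitive
    ((continuousOn_mul_inv_pow_four_add b).mono hne).intervalIntegrable]
  ring

theorem pi_mul_le_measureReal_image_annulus {φ : ℂ → ℂ} {s r R : ℝ} (hs : 0 < s) (hsr : s ≤ r)
    (hrR : r < R) (hφ : DifferentiableOn ℂ φ (ball 0 R))
    (hinj : InjOn (fun z ↦ z⁻¹ + φ z) (ball 0 R \ {0})) :
    π * ((s ^ 2)⁻¹ - (r ^ 2)⁻¹ + ‖deriv φ 0‖ ^ 2 * (r ^ 2 - s ^ 2)) ≤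
      volume.real ((fun z ↦ z⁻¹ + φ z) '' (closedBall 0 r \ closedBall 0 s)) := by
  have hφ' : DifferentiableOn ℂ (deriv φ) (ball 0 R) := hφ.deriv isOpen_ball
  have hA : closedBall (0 : ℂ) r \ ball 0 s ⊆ ball 0 R \ {0} :=
    sdiff_subset_sdiff (closedBall_subset_ball hrR) (singleton_subset_iff.2 (mem_ball_self hs))
  have hA' : closedBall (0 : ℂ) r \ closedBall 0 s ⊆ ball 0 R \ {0} :=
    (sdiff_subset_sdiff_right ball_subset_closedBall).trans hA
  have hderiv (z : ℂ) (hz : z ∈ ball (0 : ℂ) R \ {0}) :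
      HasDerivAt (fun z ↦ z⁻¹ + φ z) (deriv φ z - (z ^ 2)⁻¹) z := by
    rw [sub_eq_neg_add]
    exact (hasDerivAt_inv hz.2).fun_add
      (hφ.differentiableAt (isOpen_ball.mem_nhds hz.1)).hasDerivAt
  have hcont : ContinuousOn (fun z ↦ ‖deriv φ z - (z ^ 2)⁻¹‖ ^ 2) (closedBall 0 r \ ball 0 s) :=
    ((hφ'.continuousOn.mono (hA.trans sdiff_subset)).sub
      ((continuousOn_pow 2).inv₀ fun z hz ↦ pow_ne_zero 2 (hA hz).2)).norm.pow 2
  have havg : ContinuousOn (circleAverage (fun z ↦ ‖deriv φ z - (z ^ 2)⁻¹‖ ^ 2) 0) (Icc s r) :=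
    (hcont.mono fun z hz ↦ by simpa [and_comm] using hz).circleAverage fun ρ hρ ↦ hs.le.trans hρ.1
  rw [measureReal_image_eq_integral_norm_deriv_sq
      (measurableSet_closedBall.diff measurableSet_closedBall)
      (fun z hz ↦ (hderiv z (hA' hz)).hasDerivWithinAt) (hinj.mono hA'),
    integral_annulus_eq_integral_circleAverage hs.le hsr hcont]
  calc π * ((s ^ 2)⁻¹ - (r ^ 2)⁻¹ + ‖deriv φ 0‖ ^ 2 * (r ^ 2 - s ^ 2))
      = 2 * π * ∫ ρ in s..r, ρ * ((ρ ^ 4)⁻¹ + ‖deriv φ 0‖ ^ 2) := by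
        rw [integral_mul_inv_pow_four_add hs hsr]
        ring
    _ ≤ 2 * π * ∫ ρ in s..r, ρ * circleAverage (fun z ↦ ‖deriv φ z - (z ^ 2)⁻¹‖ ^ 2) 0 ρ := by
        gcongr
        refine intervalIntegral.integral_mono_on_of_le_Ioo hsr
          (((continuousOn_mul_inv_pow_four_add _).mono fun ρ hρ ↦
            (hs.trans_le hρ.1).ne').intervalIntegrable_of_Icc hsr)
          ((continuousOn_id.mul havg).intervalIntegrable_of_Icc hsr) fun ρ hρ ↦ ?_
        have hρ0 : 0 < ρ := hs.trans hρ.1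
        gcongr
        exact add_norm_sq_le_circleAverage_norm_sq_sub_inv_sq hρ0
          ((hφ'.mono (closedBall_subset_ball (hρ.2.trans hrR))).diffContOnCl_ball subset_rfl)

theorem inv_add_mul_sq_sub_sq_le {s t β C : ℝ} (hs : 0 < s) (hst : s ≤ t) (ht : t ≤ 1)
    (hβ : 0 ≤ β) (hC : 0 ≤ C) (hsmall : 2 * s * (β + C) ≤ 1) :
    t⁻¹ + (β / t + C) * (t ^ 2 - s ^ 2) ≤ s⁻¹ := by
  have ht0 : 0 < t := hs.trans_le hst
  have key : s * (β + C * t) * (t + s) ≤ 1 := by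
    calc s * (β + C * t) * (t + s) ≤ s * (β + C * 1) * (1 + 1) := by gcongr; linarith
      _ = 2 * s * (β + C) := by ring
      _ ≤ 1 := hsmall
  have factor : s⁻¹ - (t⁻¹ + (β / t + C) * (t ^ 2 - s ^ 2)) =
      (t - s) * (1 - s * (β + C * t) * (t + s)) / (s * t) := by
    field_simp
    ring
  have : 0 ≤ (t - s) * (1 - s * (β + C * t) * (t + s)) / (s * t) :=
    div_nonneg (mul_nonneg (sub_nonneg.2 hst) (sub_nonneg.2 key)) (by positivity)
  linarith

theorem norm_sub_mul_conj_le {b e z : ℂ} {s C : ℝ} (hs : 0 < s) (hsz : s ≤ ‖z‖) (hz : ‖z‖ ≤ 1)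
    (hC : 0 ≤ C) (he : ‖e‖ ≤ C * ‖z‖ ^ 2) (hsmall : 2 * s * (‖b‖ + C) ≤ 1) :
    ‖(z⁻¹ + b * z + e) - b * (s : ℂ) ^ 2 * conj (z⁻¹ + b * z + e)‖ ≤
      s⁻¹ + (C + ‖b‖ * (‖b‖ + C)) * s ^ 2 := by
  have hz0 : 0 < ‖z‖ := hs.trans_le hsz
  have hconj : conj z⁻¹ = z / (‖z‖ : ℂ) ^ 2 := by
    rw [Complex.inv_def, map_mul, conj_conj, conj_ofReal, normSq_eq_norm_sq, ofReal_inv,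
      ofReal_pow, div_eq_mul_inv]
  have hsplit : (z⁻¹ + b * z + e) - b * (s : ℂ) ^ 2 * conj (z⁻¹ + b * z + e) =
      z⁻¹ + b * z * ((1 - s ^ 2 / ‖z‖ ^ 2 : ℝ) : ℂ) + e
        - b * (s : ℂ) ^ 2 * conj (b * z + e) := by
    rw [add_assoc z⁻¹, map_add, hconj]
    push_cast
    ring
  have hcoeff : 0 ≤ 1 - s ^ 2 / ‖z‖ ^ 2 :=
    sub_nonneg.2 (div_le_one_of_le₀ (by gcongr) (by positivity))
  have hbe : ‖b * z + e‖ ≤ ‖b‖ + C := by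
    calc ‖b * z + e‖ ≤ ‖b‖ * ‖z‖ + C * ‖z‖ ^ 2 := by
          rw [← norm_mul]; exact (norm_add_le _ _).trans (by gcongr)
      _ ≤ ‖b‖ * 1 + C * 1 ^ 2 := by gcongr
      _ = ‖b‖ + C := by ring
  calc ‖(z⁻¹ + b * z + e) - b * (s : ℂ) ^ 2 * conj (z⁻¹ + b * z + e)‖
      ≤ ‖z‖⁻¹ + ‖b‖ * ‖z‖ * (1 - s ^ 2 / ‖z‖ ^ 2) + C * ‖z‖ ^ 2
          + ‖b‖ * s ^ 2 * (‖b‖ + C) := by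
        rw [hsplit]
        refine (norm_sub_le _ _).trans (add_le_add (norm_add₃_le.trans ?_) ?_)
        · rw [norm_inv, norm_mul, norm_mul, Complex.norm_of_nonneg hcoeff]
          gcongr
        · rw [norm_mul, norm_mul, norm_pow, Complex.norm_of_nonneg hs.le, norm_conj]
          gcongr
    _ = ‖z‖⁻¹ + (‖b‖ / ‖z‖ + C) * (‖z‖ ^ 2 - s ^ 2) + (C + ‖b‖ * (‖b‖ + C)) * s ^ 2 := by
        field_simp
        ring
    _ ≤ s⁻¹ + (C + ‖b‖ * (‖b‖ + C)) * s ^ 2 := by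
        gcongr
        exact inv_add_mul_sq_sub_sq_le hs hsz hz (norm_nonneg b) hC hsmall

theorem eventually_annulus_area_le {φ : ℂ → ℂ} {r : ℝ} (hr : 0 < r) (hr1 : r < 1)
    (hφ : DifferentiableOn ℂ φ (ball 0 1)) (hφ0 : φ 0 = 0)
    (hinj : InjOn (fun z ↦ z⁻¹ + φ z) (ball 0 1 \ {0})) :
    ∃ K : ℝ, ∀ᶠ s in 𝓝[>] (0 : ℝ),
      (1 - ‖deriv φ 0‖ ^ 2 * s ^ 4) *
        ((s ^ 2)⁻¹ - (r ^ 2)⁻¹ + ‖deriv φ 0‖ ^ 2 * (r ^ 2 - s ^ 2)) ≤ (s⁻¹ + K * s ^ 2) ^ 2 := by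
  set b := deriv φ 0
  obtain ⟨C, hC, hTaylor⟩ := exists_norm_sub_sub_le_mul_sq (ball_mem_nhds (0 : ℂ) one_pos) hφ
    (isCompact_closedBall 0 r) (closedBall_subset_ball hr1)
  simp only [hφ0, sub_zero] at hTaylor
  refine ⟨C + ‖b‖ * (‖b‖ + C), ?_⟩
  have hsmall₁ : ∀ᶠ s : ℝ in 𝓝 0, 2 * s * (‖b‖ + C) ≤ 1 :=
    (by fun_prop : Continuous fun s : ℝ ↦ 2 * s * (‖b‖ + C)).tendsto' 0 0 (by simp)
      |>.eventually_le_const one_pos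
  have hsmall₂ : ∀ᶠ s : ℝ in 𝓝 0, ‖b‖ ^ 2 * s ^ 4 ≤ 1 :=
    (by fun_prop : Continuous fun s : ℝ ↦ ‖b‖ ^ 2 * s ^ 4).tendsto' 0 0 (by simp)
      |>.eventually_le_const one_pos
  filter_upwards [self_mem_nhdsWithin, nhdsWithin_le_nhds (eventually_le_nhds hr),
    nhdsWithin_le_nhds hsmall₁, nhdsWithin_le_nhds hsmall₂] with s (hs : 0 < s) hsr hs₁ hs₂
  have hcontained : ∀ w ∈ (fun z ↦ z⁻¹ + φ z) '' (closedBall 0 r \ closedBall 0 s),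
      ‖w - b * (s : ℂ) ^ 2 * conj w‖ ≤ s⁻¹ + (C + ‖b‖ * (‖b‖ + C)) * s ^ 2 := by
    rintro _ ⟨z, ⟨hzr, hzs⟩, rfl⟩
    have he : ‖φ z - z * b‖ ≤ C * ‖z‖ ^ 2 := hTaylor z hzr
    have hsum : z⁻¹ + b * z + (φ z - z * b) = z⁻¹ + φ z := by ring
    rw [mem_closedBall_zero_iff] at hzr hzs
    simp only [← hsum]
    exact norm_sub_mul_conj_le hs (not_le.1 hzs).le (hzr.trans hr1.le) hC he hs₁
  have upper := measureReal_le_of_norm_sub_mul_conj_le (by positivity) hcontained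
  have lower := pi_mul_le_measureReal_image_annulus hs hsr hr1 hφ hinj
  have hcoeff : ‖b * (s : ℂ) ^ 2‖ ^ 2 = ‖b‖ ^ 2 * s ^ 4 := by
    rw [norm_mul, norm_pow, Complex.norm_of_nonneg hs.le]
    ring
  rw [hcoeff] at upper
  refine le_of_mul_le_mul_left ?_ pi_pos
  calc _ = (1 - ‖b‖ ^ 2 * s ^ 4) *
        (π * ((s ^ 2)⁻¹ - (r ^ 2)⁻¹ + ‖b‖ ^ 2 * (r ^ 2 - s ^ 2))) := by ring
    _ ≤ _ := (mul_le_mul_of_nonneg_left lower (sub_nonneg.2 hs₂)).trans upper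

theorem norm_deriv_mul_sq_le_one_of_injOn_inv_add {φ : ℂ → ℂ} {r : ℝ} (hr : 0 < r) (hr1 : r < 1)
    (hφ : DifferentiableOn ℂ φ (ball 0 1)) (hφ0 : φ 0 = 0)
    (hinj : InjOn (fun z ↦ z⁻¹ + φ z) (ball 0 1 \ {0})) : ‖deriv φ 0‖ * r ^ 2 ≤ 1 := by
  obtain ⟨K, hK⟩ := eventually_annulus_area_le hr hr1 hφ hφ0 hinj
  set β := ‖deriv φ 0‖
  -- the terms `(s ^ 2)⁻¹` cancel, which leaves an inequality continuous at `s = 0`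
  have hcancel : ∀ᶠ s in 𝓝[>] (0 : ℝ),
      (1 - β ^ 2 * s ^ 4) * (β ^ 2 * (r ^ 2 - s ^ 2) - (r ^ 2)⁻¹) ≤
        β ^ 2 * s ^ 2 + 2 * K * s + K ^ 2 * s ^ 4 := by
    filter_upwards [hK, self_mem_nhdsWithin] with s hs (hs0 : 0 < s)
    have hleft : (1 - β ^ 2 * s ^ 4) * ((s ^ 2)⁻¹ - (r ^ 2)⁻¹ + β ^ 2 * (r ^ 2 - s ^ 2)) =
        (1 - β ^ 2 * s ^ 4) * (β ^ 2 * (r ^ 2 - s ^ 2) - (r ^ 2)⁻¹) +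
          (s ^ 2)⁻¹ - β ^ 2 * s ^ 2 := by
      field_simp
      ring
    have hright : (s⁻¹ + K * s ^ 2) ^ 2 = (s ^ 2)⁻¹ + 2 * K * s + K ^ 2 * s ^ 4 := by
      field_simp
      ring
    linarith
  have hlim : β ^ 2 * r ^ 2 - (r ^ 2)⁻¹ ≤ 0 := by
    refine le_of_tendsto_of_tendsto (b := 𝓝[>] (0 : ℝ)) ?_ ?_ hcancel <;>
      exact tendsto_nhdsWithin_of_tendsto_nhds (Continuous.tendsto' (by fun_prop) _ _ (by simp))
  have hsq : (β * r ^ 2) ^ 2 ≤ 1 := by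
    rw [sub_nonpos, ← one_div, le_div_iff₀ (by positivity)] at hlim
    linarith
  exact (sq_le_one_iff₀ (by positivity)).1 hsq

theorem norm_deriv_le_one_of_injOn_inv_add {φ : ℂ → ℂ} (hφ : DifferentiableOn ℂ φ (ball 0 1))
    (hinj : InjOn (fun z ↦ z⁻¹ + φ z) (ball 0 1 \ {0})) : ‖deriv φ 0‖ ≤ 1 := by
  have hinj' : InjOn (fun z ↦ z⁻¹ + (φ z - φ 0)) (ball 0 1 \ {0}) :=
    fun z hz w hw (hzw : z⁻¹ + (φ z - φ 0) = w⁻¹ + (φ w - φ 0)) ↦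
      hinj hz hw (show z⁻¹ + φ z = w⁻¹ + φ w by linear_combination hzw)
  have hbound : ∀ᶠ r in 𝓝[<] (1 : ℝ), ‖deriv φ 0‖ * r ^ 2 ≤ 1 := by
    filter_upwards [Ioo_mem_nhdsLT one_pos] with r hr
    simpa using norm_deriv_mul_sq_le_one_of_injOn_inv_add hr.1 hr.2 (hφ.sub_const (φ 0))
      (sub_self _) hinj'
  refine le_of_tendsto (tendsto_nhdsWithin_of_tendsto_nhds ?_) hbound
  exact Continuous.tendsto' (by fun_prop) _ _ (by simp)

/-! ### Bounds for the second coefficient -/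

theorem norm_deriv_le_one_of_injOn_comp_sq_div {v : ℂ → ℂ} (hv : DifferentiableOn ℂ v (ball 0 1))
    (hv0 : v 0 = 1) (hinj : InjOn (fun z ↦ v (z ^ 2) / z) (ball 0 1 \ {0})) :
    ‖deriv v 0‖ ≤ 1 := by
  have hnhds : ball (0 : ℂ) 1 ∈ 𝓝 0 := ball_mem_nhds 0 one_pos
  have hmaps : MapsTo (fun z : ℂ ↦ z ^ 2) (ball 0 1) (ball 0 1) := fun z hz ↦ by
    simpa using hz
  have hd : DifferentiableOn ℂ (fun z ↦ dslope v 0 (z ^ 2)) (ball 0 1) :=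
    ((differentiableOn_dslope hnhds).2 hv).fun_comp (differentiableOn_pow 2) hmaps
  set φ : ℂ → ℂ := fun z ↦ z * dslope v 0 (z ^ 2)
  have hφ : DifferentiableOn ℂ φ (ball 0 1) := differentiableOn_id.fun_mul hd
  have hφ' : deriv φ 0 = deriv v 0 := by
    rw [((hasDerivAt_id' (0 : ℂ)).fun_mul (hd.differentiableAt hnhds).hasDerivAt).deriv]
    simp
  have heq : EqOn (fun z ↦ v (z ^ 2) / z) (fun z ↦ z⁻¹ + φ z) (ball 0 1 \ {0}) := by
    intro z hz
    have hz0 : z ≠ 0 := hz.2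
    have := sub_smul_dslope v 0 (z ^ 2)
    rw [hv0, sub_zero, smul_eq_mul] at this
    simp only [φ]
    field_simp
    linear_combination -this
  rw [← hφ']
  exact norm_deriv_le_one_of_injOn_inv_add hφ (hinj.congr heq)

theorem exists_sq_mul_sub_eq_of_injOn {f : ℂ → ℂ} (hf : DifferentiableOn ℂ f (ball 0 1))
    (hinj : InjOn f (ball 0 1)) (hf1 : deriv f 0 = 1) :
    ∃ v : ℂ → ℂ, DifferentiableOn ℂ v (ball 0 1) ∧ v 0 = 1 ∧ deriv v 0 = -deriv (deriv f) 0 / 4 ∧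
      (∀ z ∈ ball 0 1, v z ≠ 0) ∧ ∀ z ∈ ball 0 1, v z ^ 2 * (f z - f 0) = z := by
  have h0 : (0 : ℂ) ∈ ball 0 1 := mem_ball_self one_pos
  have hnhds : ball (0 : ℂ) 1 ∈ 𝓝 0 := ball_mem_nhds 0 one_pos
  set h := dslope f 0
  have hh : DifferentiableOn ℂ h (ball 0 1) := (differentiableOn_dslope hnhds).2 hf
  have hh0 : h 0 = 1 := (dslope_same f 0).trans hf1
  have hmul (z : ℂ) : z * h z = f z - f 0 := by
    simpa using sub_smul_dslope f 0 z
  have hh_ne (z : ℂ) (hz : z ∈ ball 0 1) : h z ≠ 0 := by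
    intro hhz
    have : z = 0 := hinj hz h0 (sub_eq_zero.1 (by rw [← hmul, hhz, mul_zero]))
    simp [this, hh0] at hhz
  obtain ⟨v, hv, hv0, hv_sq⟩ := exists_differentiableOn_pow_eq (isSimplyConnected_ball 0 one_pos)
    isOpen_ball (hh.fun_inv hh_ne) (fun z hz ↦ inv_ne_zero (hh_ne z hz)) two_ne_zero h0
    (w₀ := 1) (by simp [hh0])
  have hv' : 2 * deriv v 0 = -deriv h 0 := by
    have h1 := ((hv.differentiableAt hnhds).hasDerivAt.fun_pow 2).deriv
    have h2 := ((hh.differentiableAt hnhds).hasDerivAt.fun_inv (hh_ne 0 h0)).deriv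
    simp only [hv_sq] at h1
    rw [h2] at h1
    simpa [hh0, hv0] using h1.symm
  refine ⟨v, hv, hv0, ?_, fun z hz hvz ↦ ?_, fun z hz ↦ ?_⟩
  · rw [deriv_dslope_self (hf.analyticAt hnhds)] at hv'
    linear_combination hv' / 2
  · have := hv_sq z
    rw [hvz, zero_pow two_ne_zero] at this
    exact hh_ne z hz (inv_eq_zero.1 this.symm)
  · rw [hv_sq, ← hmul, mul_comm z, inv_mul_cancel_left₀ (hh_ne z hz)]

theorem norm_deriv_deriv_le_four_of_injOn {f : ℂ → ℂ} (hf : DifferentiableOn ℂ f (ball 0 1))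
    (hinj : InjOn f (ball 0 1)) (hf1 : deriv f 0 = 1) : ‖deriv (deriv f) 0‖ ≤ 4 := by
  obtain ⟨v, hv, hv0, hv', hv_ne, hv_sq⟩ := exists_sq_mul_sub_eq_of_injOn hf hinj hf1
  have hsq_mem {z : ℂ} (hz : z ∈ ball (0 : ℂ) 1 \ {0}) : z ^ 2 ∈ ball (0 : ℂ) 1 := by
    simpa using hz.1
  have hsqrt_inj : InjOn (fun z ↦ v (z ^ 2) / z) (ball 0 1 \ {0}) := by
    have hinv {z : ℂ} (hz : z ∈ ball (0 : ℂ) 1 \ {0}) :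
        (v (z ^ 2) / z) ^ 2 = (f (z ^ 2) - f 0)⁻¹ := by
      have hz0 : z ≠ 0 := hz.2
      refine eq_inv_of_mul_eq_one_left ?_
      rw [div_pow, div_mul_eq_mul_div, hv_sq _ (hsq_mem hz), div_self (pow_ne_zero 2 hz0)]
    intro z hz w hw (hzw : v (z ^ 2) / z = v (w ^ 2) / w)
    have hf_eq : f (z ^ 2) = f (w ^ 2) := by
      rw [← sub_left_inj (a := f 0), ← inv_inj, ← hinv hz, ← hinv hw, hzw]
    rw [hinj (hsq_mem hz) (hsq_mem hw) hf_eq] at hzw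
    exact inv_injective (mul_left_cancel₀ (hv_ne _ (hsq_mem hw)) hzw)
  have hbound := norm_deriv_le_one_of_injOn_comp_sq_div hv hv0 hsqrt_inj
  rw [hv', norm_div, norm_neg] at hbound
  norm_num at hbound
  linarith

theorem norm_deriv_le_of_re_pos {p : ℂ → ℂ} {c : ℂ} {R : ℝ} (hR : 0 < R)
    (hp : DifferentiableOn ℂ p (ball c R)) (hpos : ∀ z ∈ ball c R, 0 < (p z).re) :
    ‖deriv p c‖ ≤ 2 * (p c).re / R := by
  have hc : c ∈ ball c R := mem_ball_self hR
  have hden (z : ℂ) (hz : z ∈ ball c R) : p z + conj (p c) ≠ 0 := by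
    intro h
    have := congrArg re h
    simp only [add_re, conj_re, zero_re] at this
    linarith [hpos z hz, hpos c hc]
  -- the Cayley transform carrying the right half-plane to the unit disk and `p c` to `0`
  set ω : ℂ → ℂ := fun z ↦ (p z - p c) / (p z + conj (p c)) with hω
  have hω_diff : DifferentiableOn ℂ ω (ball c R) :=
    (hp.sub_const _).fun_div (hp.add_const _) hden
  have hω_maps : MapsTo ω (ball c R) (closedBall (ω c) 1) := by
    intro z hz
    have h : ‖p z - p c‖ ≤ ‖p z + conj (p c)‖ := by
      rw [← sq_le_sq₀ (norm_nonneg _) (norm_nonneg _), Complex.sq_norm, Complex.sq_norm,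
        normSq_apply, normSq_apply]
      simp only [sub_re, sub_im, add_re, add_im, conj_re, conj_im]
      nlinarith [mul_pos (hpos z hz) (hpos c hc)]
    simpa [hω] using div_le_one_of_le₀ h (norm_nonneg _)
  have hω_deriv : deriv ω c = deriv p c / (2 * (p c).re : ℝ) := by
    have hp' := (hp.differentiableAt (isOpen_ball.mem_nhds hc)).hasDerivAt
    rw [((hp'.sub_const _).fun_div (hp'.add_const _) (hden c hc)).deriv, sub_self, zero_mul,
      sub_zero, sq, mul_div_mul_right _ _ (hden c hc), Complex.add_conj]
  have schwarz := Complex.norm_deriv_le_div_of_mapsTo_ball hω_diff hω_maps hR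
  have h2 : 0 < 2 * (p c).re := by linarith [hpos c hc]
  rw [hω_deriv, norm_div, Complex.norm_real, Real.norm_of_nonneg h2.le, div_le_div_iff₀ h2 hR]
    at schwarz
  rw [le_div_iff₀ hR]
  linarith

theorem norm_deriv_deriv_le_of_convex {f : ℂ → ℂ} {R : ℝ} (hR : 0 < R)
    (hf : DifferentiableOn ℂ f (ball 0 R))
    (hf' : ∀ z ∈ ball (0 : ℂ) R, deriv f z ≠ 0)
    (hconv : ∀ z ∈ ball (0 : ℂ) R, 0 < (1 + z * deriv (deriv f) z / deriv f z).re) :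
    ‖deriv (deriv f) 0‖ ≤ 2 * ‖deriv f 0‖ / R := by
  have h0 : (0 : ℂ) ∈ ball 0 R := mem_ball_self hR
  have hnhds : ball (0 : ℂ) R ∈ 𝓝 0 := isOpen_ball.mem_nhds h0
  have hd1 : DifferentiableOn ℂ (deriv f) (ball 0 R) := hf.deriv isOpen_ball
  have hd2 : DifferentiableOn ℂ (deriv (deriv f)) (ball 0 R) := hd1.deriv isOpen_ball
  have hp : DifferentiableOn ℂ (fun z ↦ 1 + z * deriv (deriv f) z / deriv f z) (ball 0 R) :=
    ((differentiableOn_id.fun_mul hd2).fun_div hd1 hf').const_add 1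
  have hp' : deriv (fun z ↦ 1 + z * deriv (deriv f) z / deriv f z) 0 =
      deriv (deriv f) 0 / deriv f 0 := by
    have := (((hasDerivAt_id' (0 : ℂ)).fun_mul (hd2.differentiableAt hnhds).hasDerivAt).fun_div
      (hd1.differentiableAt hnhds).hasDerivAt (hf' 0 h0)).const_add 1
    rw [this.deriv]
    field_simp [hf' 0 h0]
    simp
  have key := norm_deriv_le_of_re_pos hR hp hconv
  rw [hp', norm_div, div_le_iff₀ (norm_pos_iff.2 (hf' 0 h0))] at key
  simpa [div_mul_eq_mul_div] using key

/-! ### The cardioid domain -/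

theorem mem_omegaCar_iff {w : ℂ} :
    w ∈ omegaCar ↔ ‖2 * w - 1‖ ^ 2 < 2 * (‖2 * w - 1‖ + (2 * w - 1).re) := by
  have norm_sub_one_lt_iff (s : ℂ) : ‖s - 1‖ < 1 ↔ ‖s‖ ^ 2 < 2 * s.re := by
    rw [← sq_lt_one_iff₀ (norm_nonneg _), Complex.sq_norm, Complex.sq_norm, normSq_apply,
      normSq_apply, sub_re, sub_im, one_re, one_im]
    constructor <;> intro h <;> linarith
  have norm_sq_add_re_sq (s : ℂ) : 2 * (‖s ^ 2‖ + (s ^ 2).re) = (2 * s.re) ^ 2 := by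
    rw [norm_pow, Complex.sq_norm, normSq_apply, sq s, mul_re]
    ring
  constructor
  · rintro ⟨u, hu, rfl⟩
    have hu' : ‖1 + u‖ ^ 2 < 2 * (1 + u).re := by
      rw [← norm_sub_one_lt_iff, add_sub_cancel_left]
      exact hu
    rw [show 2 * (1 + u + u ^ 2 / 2) - 1 = (1 + u) ^ 2 by ring, norm_sq_add_re_sq, norm_pow]
    gcongr
  · intro hw
    set s : ℂ := Complex.sqrt (2 * w - 1)
    have hs : s ^ 2 = 2 * w - 1 := Complex.cpow_ofNat_inv_pow _ 2
    have hs_re : 0 ≤ s.re := by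
      rw [show s.re = _ from Complex.cpow_inv_two_re _]
      positivity
    rw [← hs, norm_sq_add_re_sq, norm_pow] at hw
    refine ⟨s - 1, (norm_sub_one_lt_iff s).2 (lt_of_pow_lt_pow_left₀ 2 (by positivity) hw), ?_⟩
    linear_combination -hs / 2

theorem ball_subset_omegaCar : ball (7 / 8 : ℂ) (3 / 8) ⊆ omegaCar := by
  intro w hw
  rw [mem_omegaCar_iff]
  have hw' : ‖2 * w - 1‖ ^ 2 < 3 / 2 * (2 * w - 1).re := by
    rw [mem_ball_iff_norm, ← sq_lt_sq₀ (norm_nonneg _) (by norm_num), Complex.sq_norm,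
      normSq_apply] at hw
    rw [Complex.sq_norm, normSq_apply]
    norm_num at hw ⊢
    linarith
  nlinarith [norm_nonneg (2 * w - 1)]

theorem one_add_two_mul_div_mem_omegaCar {w : ℂ} (hw : ‖w‖ < 1 / 3) :
    (1 + 2 * w) / (1 + w) ∈ omegaCar := by
  have hne : 1 + w ≠ 0 :=
    slitPlane_ne_zero (mem_slitPlane_of_norm_lt_one (hw.trans (by norm_num)))
  have hlt : ‖1 + 9 * w‖ < 3 * ‖1 + w‖ := by
    rw [← sq_lt_sq₀ (norm_nonneg _) (by norm_num), Complex.sq_norm, normSq_apply] at hw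
    rw [← sq_lt_sq₀ (norm_nonneg _) (by positivity), mul_pow, Complex.sq_norm, Complex.sq_norm,
      normSq_apply, normSq_apply]
    norm_num
    linarith
  apply ball_subset_omegaCar
  rw [mem_ball_iff_norm,
    show (1 + 2 * w) / (1 + w) - 7 / 8 = (1 + 9 * w) / (8 * (1 + w)) by field_simp; ring,
    norm_div, norm_mul, div_lt_iff₀ (mul_pos (by norm_num) (norm_pos_iff.2 hne))]
  norm_num
  linarith

theorem sCar_add_mul_sq {c : ℂ} (hc : ‖c‖ ≤ 1 / 3) : SCar fun z ↦ z + c * z ^ 2 := by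
  have hderiv (z : ℂ) : HasDerivAt (fun z : ℂ ↦ z + c * z ^ 2) (1 + 2 * (c * z)) z := by
    convert! (hasDerivAt_id' z).fun_add ((hasDerivAt_pow 2 z).const_mul c) using 1
    push_cast
    ring
  have hfactor (z : ℂ) : z + c * z ^ 2 = z * (1 + c * z) := by ring
  have hcz {z : ℂ} (hz : ‖z‖ < 1) : ‖c * z‖ < 1 / 3 := by
    rw [norm_mul]
    nlinarith [norm_nonneg c, norm_nonneg z]
  have hne {z : ℂ} (hz : ‖z‖ < 1) : 1 + c * z ≠ 0 :=
    slitPlane_ne_zero (mem_slitPlane_of_norm_lt_one ((hcz hz).trans (by norm_num)))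
  refine ⟨fun z _ ↦ (hderiv z).differentiableAt.differentiableWithinAt, by simp, ?_,
    fun z hz hz0 ↦ ?_, fun z hz hz0 ↦ ?_⟩
  · simp [(hderiv 0).deriv]
  · simpa only [hfactor] using mul_ne_zero hz0 (hne hz)
  · dsimp only
    rw [(hderiv z).deriv, hfactor, mul_div_mul_left _ _ hz0]
    exact one_add_two_mul_div_mem_omegaCar (hcz hz)

end

theorem stmt_15 (f : ℂ → ℂ)
    (hfd : DifferentiableOn ℂ f (Metric.ball (0 : ℂ) 1))
    (hf0 : f 0 = 0) (hf1 : deriv f 0 = 1)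
    (a₂ : ℂ) (ha₂ : a₂ = deriv (deriv f) 0 / 2) :
    ((∀ z : ℂ, ‖z‖ < 1 → deriv f z ≠ 0 ∧
        0 < (1 + z * deriv (deriv f) z / deriv f z).re) →
      ∀ ρ : ℝ, 0 < ρ → ρ ≤ 1 / 3 → SCar (fun z : ℂ => z + a₂ * (ρ : ℂ) * z ^ 2)) ∧
    (Set.InjOn f (Metric.ball (0 : ℂ) 1) →
      ∀ ρ : ℝ, 0 < ρ → ρ ≤ 1 / 6 → SCar (fun z : ℂ => z + a₂ * (ρ : ℂ) * z ^ 2)) := by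
  subst ha₂
  constructor
  · intro hconv ρ hρ hρ3
    have hcoeff : ‖deriv (deriv f) 0‖ ≤ 2 := by
      simpa [hf1] using norm_deriv_deriv_le_of_convex one_pos hfd
        (fun z hz ↦ (hconv z (mem_ball_zero_iff.1 hz)).1)
        (fun z hz ↦ (hconv z (mem_ball_zero_iff.1 hz)).2)
    apply sCar_add_mul_sq
    calc ‖deriv (deriv f) 0 / 2 * ρ‖ = ‖deriv (deriv f) 0‖ / 2 * ρ := by
          rw [norm_mul, norm_div, Complex.norm_two, Complex.norm_of_nonneg hρ.le]
      _ ≤ 2 / 2 * (1 / 3) := by gcongr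
      _ = 1 / 3 := by norm_num
  · intro hinj ρ hρ hρ6
    have hcoeff := norm_deriv_deriv_le_four_of_injOn hfd hinj hf1
    apply sCar_add_mul_sq
    calc ‖deriv (deriv f) 0 / 2 * ρ‖ = ‖deriv (deriv f) 0‖ / 2 * ρ := by
          rw [norm_mul, norm_div, Complex.norm_two, Complex.norm_of_nonneg hρ.le]
      _ ≤ 4 / 2 * (1 / 6) := by gcongr
      _ = 1 / 3 := by norm_num
end

section
/- Let f ∈ S*_car and let 0 ≤ α < 1. Define s₁(α) = 1 if 0 ≤ α ≤ 1/4, s₁(α) = √((3 − 4α)/2) if 1/4 < α ≤ 5/8, and s₁(α) = 1 − √(2α − 1) if 5/8 < α < 1. Then Re(z f'(z)/f(z)) > α for every z with 0 < |z| < s₁(α). -/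
open Complex Metric

/-!
Write `φ u = 1 + u + u ^ 2 / 2`. Since `2 * φ u - 1 = (1 + u) ^ 2`, the principal square root gives
a holomorphic inverse of `φ` on `φ '' ball 0 1`. Composing it with the holomorphic extension of
`z * f' z / f z` over the origin gives a self-map of the disk fixing `0`, so by the Schwarz lemma
`z * f' z / f z = φ u` for some `u` with `‖u‖ ≤ ‖z‖`. The identity
`re (φ u) = 3 / 4 - ‖u‖ ^ 2 / 2 + (re u + 1 / 2) ^ 2` then locates the minimum of `re ∘ φ` on a
circle: at `re u = -1 / 2` if the circle reaches that line, and at `u = -‖u‖` otherwise.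
-/

open Set

section Subordination

variable {E F G : Type*} [NormedAddCommGroup E] [NormedSpace ℂ E]
  [NormedAddCommGroup F] [NormedSpace ℂ F] [NormedAddCommGroup G] [NormedSpace ℂ G]

theorem mem_image_closedBall_of_mapsTo_image_ball {g : G → F} {φ : E → F} {ψ : F → E}
    {b : E} {c z : G} {R₁ R₂ : ℝ} (hψ : DifferentiableOn ℂ ψ (φ '' ball b R₂))
    (hψφ : LeftInvOn ψ φ (ball b R₂)) (hg : DifferentiableOn ℂ g (ball c R₁))
    (hgφ : MapsTo g (ball c R₁) (φ '' ball b R₂)) (hgc : g c = φ b) (hz : z ∈ ball c R₁) :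
    g z ∈ φ '' closedBall b (R₂ / R₁ * dist z c) := by
  have hR₂ : 0 < R₂ := nonempty_ball.mp (image_nonempty.mp ⟨_, hgφ hz⟩)
  have hωc : (ψ ∘ g) c = b := by
    rw [Function.comp_apply, hgc, hψφ (mem_ball_self hR₂)]
  have hω_maps : MapsTo (ψ ∘ g) (ball c R₁) (closedBall ((ψ ∘ g) c) R₂) := by
    rw [hωc]
    exact ((hψφ.mapsTo (surjOn_image φ _)).comp hgφ).mono_right ball_subset_closedBall
  have h_schwarz : dist ((ψ ∘ g) z) b ≤ R₂ / R₁ * dist z c := by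
    simpa only [hωc] using dist_le_div_mul_dist_of_mapsTo_ball (hψ.comp hg hgφ) hω_maps hz
  exact ⟨ψ (g z), h_schwarz, hψφ.rightInvOn_image (hgφ hz)⟩

end Subordination

section StarlikeQuotient

variable {𝕜 : Type*} [NontriviallyNormedField 𝕜]

theorem dslope_ne_zero {E : Type*} [NormedAddCommGroup E] [NormedSpace 𝕜 E] {f : 𝕜 → E} {a b : 𝕜}
    (ha : deriv f a ≠ 0) (hb : b ≠ a → f b ≠ f a) : dslope f a b ≠ 0 := by
  rcases eq_or_ne b a with rfl | hba
  · rwa [dslope_same]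
  · rw [dslope_of_ne f hba, slope_def_module]
    exact smul_ne_zero (inv_ne_zero (sub_ne_zero.mpr hba)) (sub_ne_zero.mpr (hb hba))

/-- The quotient `(z - c) * f' z / f z` of a function `f` vanishing at `c`, whose real part measures
starlikeness of `f`. Dividing `f'` by `dslope f c` gives the limiting value also at `z = c`, where
the quotient itself is `0 / 0`. -/
noncomputable def starlikeQuotient (f : 𝕜 → 𝕜) (c z : 𝕜) : 𝕜 :=
  deriv f z / dslope f c z

theorem starlikeQuotient_self {f : 𝕜 → 𝕜} {c : 𝕜} (hc : deriv f c ≠ 0) :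
    starlikeQuotient f c c = 1 := by
  rw [starlikeQuotient, dslope_same, div_self hc]

theorem starlikeQuotient_of_ne {f : 𝕜 → 𝕜} {c z : 𝕜} (hfc : f c = 0) (hz : z ≠ c) :
    starlikeQuotient f c z = (z - c) * deriv f z / f z := by
  rw [starlikeQuotient, dslope_of_ne f hz, slope_def_field, hfc, sub_zero, div_div_eq_mul_div,
    mul_comm]

theorem differentiableOn_starlikeQuotient {f : ℂ → ℂ} {c : ℂ} {U : Set ℂ} (hU : IsOpen U)
    (hcU : c ∈ U) (hf : DifferentiableOn ℂ f U) (hc : deriv f c ≠ 0)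
    (hne : ∀ z ∈ U, z ≠ c → f z ≠ f c) : DifferentiableOn ℂ (starlikeQuotient f c) U :=
  (hf.deriv hU).div ((differentiableOn_dslope (hU.mem_nhds hcU)).mpr hf)
    fun z hz ↦ dslope_ne_zero hc (hne z hz)

theorem mul_deriv_div_mem_image_closedBall {E : Type*} [NormedAddCommGroup E] [NormedSpace ℂ E]
    {f : ℂ → ℂ} {φ : E → ℂ} {ψ : ℂ → E} {b : E} {c z : ℂ} {R₁ R₂ : ℝ}
    (hψ : DifferentiableOn ℂ ψ (φ '' ball b R₂)) (hψφ : LeftInvOn ψ φ (ball b R₂)) (hφb : φ b = 1)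
    (hf : DifferentiableOn ℂ f (ball c R₁)) (hfc : f c = 0) (hc : deriv f c ≠ 0)
    (hne : ∀ w ∈ ball c R₁, w ≠ c → f w ≠ 0)
    (hfφ : ∀ w ∈ ball c R₁, w ≠ c → (w - c) * deriv f w / f w ∈ φ '' ball b R₂)
    (hz : z ∈ ball c R₁) (hzc : z ≠ c) :
    (z - c) * deriv f z / f z ∈ φ '' closedBall b (R₂ / R₁ * dist z c) := by
  have hR₂ : 0 < R₂ := nonempty_ball.mp (image_nonempty.mp ⟨_, hfφ z hz hzc⟩)
  have hcR₁ : c ∈ ball c R₁ := mem_ball_self (nonempty_ball.mp ⟨z, hz⟩)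
  have hq : DifferentiableOn ℂ (starlikeQuotient f c) (ball c R₁) :=
    differentiableOn_starlikeQuotient isOpen_ball hcR₁ hf hc (by simpa only [hfc] using hne)
  have hqc : starlikeQuotient f c c = φ b := (starlikeQuotient_self hc).trans hφb.symm
  have hqφ : MapsTo (starlikeQuotient f c) (ball c R₁) (φ '' ball b R₂) := by
    intro w hw
    rcases eq_or_ne w c with rfl | hwc
    · exact ⟨b, mem_ball_self hR₂, hqc.symm⟩
    · rw [starlikeQuotient_of_ne hfc hwc]
      exact hfφ w hw hwc
  rw [← starlikeQuotient_of_ne hfc hzc]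
  exact mem_image_closedBall_of_mapsTo_image_ball hψ hψφ hq hqφ hqc hz

end StarlikeQuotient

theorem sq_mem_slitPlane_iff {z : ℂ} : z ^ 2 ∈ slitPlane ↔ z.re ≠ 0 := by
  have h_re : (z ^ 2).re = z.re ^ 2 - z.im ^ 2 := by simp [sq]
  have h_im : (z ^ 2).im = 2 * (z.re * z.im) := by simp [sq]; ring
  rw [mem_slitPlane_iff, h_re, h_im]
  refine ⟨fun h hz ↦ ?_, fun hz ↦ ?_⟩
  · rw [hz, zero_mul, mul_zero, ne_self_iff_false, or_false] at h
    linarith [sq_nonneg z.im]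
  · rcases eq_or_ne z.im 0 with him | him
    · left
      rw [him, zero_pow two_ne_zero, sub_zero]
      positivity
    · exact .inr (mul_ne_zero two_ne_zero (mul_ne_zero hz him))

/-- The function `φ_car`, which maps the unit disk onto `omegaCar`. -/
noncomputable def phiCar (u : ℂ) : ℂ := 1 + u + u ^ 2 / 2

/-- The inverse of `phiCar` on `omegaCar`, obtained by completing the square with the principal
branch of the square root. -/
noncomputable def phiCarInv (w : ℂ) : ℂ := Complex.sqrt (2 * w - 1) - 1

theorem phiCar_zero : phiCar 0 = 1 := by simp [phiCar]

theorem omegaCar_eq_image : omegaCar = phiCar '' ball 0 1 := by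
  ext w
  simp only [omegaCar, phiCar, mem_ofPred_eq, mem_image, mem_ball_zero_iff, eq_comm]

theorem two_mul_phiCar_sub_one (u : ℂ) : 2 * phiCar u - 1 = (1 + u) ^ 2 := by
  rw [phiCar]
  ring

theorem one_add_re_pos_of_mem_ball {u : ℂ} (hu : u ∈ ball 0 1) : 0 < (1 + u).re := by
  rw [add_re, one_re]
  linarith [neg_le_of_abs_le (abs_re_le_norm u), mem_ball_zero_iff.mp hu]

theorem leftInvOn_phiCarInv : LeftInvOn phiCarInv phiCar (ball 0 1) := by
  intro u hu
  rw [phiCarInv, two_mul_phiCar_sub_one, Complex.sqrt,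
    sq_cpow_two_inv (one_add_re_pos_of_mem_ball hu), add_sub_cancel_left]

theorem differentiableOn_phiCarInv : DifferentiableOn ℂ phiCarInv (phiCar '' ball 0 1) := by
  refine (differentiableOn_sqrt.comp (by fun_prop) ?_).sub_const 1
  rintro _ ⟨u, hu, rfl⟩
  beta_reduce
  rw [two_mul_phiCar_sub_one, sq_mem_slitPlane_iff]
  exact (one_add_re_pos_of_mem_ball hu).ne'

theorem SCar.mul_deriv_div_mem_image_phiCar {f : ℂ → ℂ} (hf : SCar f) {z : ℂ} (hz : ‖z‖ < 1)
    (hz0 : z ≠ 0) : z * deriv f z / f z ∈ phiCar '' closedBall 0 ‖z‖ := by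
  obtain ⟨hfd, hf0, hf1, hne, hmem⟩ := hf
  simpa using mul_deriv_div_mem_image_closedBall differentiableOn_phiCarInv
    leftInvOn_phiCarInv phiCar_zero hfd hf0 (hf1 ▸ one_ne_zero)
    (fun w hw ↦ hne w (mem_ball_zero_iff.mp hw))
    (fun w hw hw0 ↦ by simpa [← omegaCar_eq_image] using hmem w (mem_ball_zero_iff.mp hw) hw0)
    (mem_ball_zero_iff.mpr hz) hz0

theorem re_phiCar (u : ℂ) :
    (phiCar u).re = 3 / 4 - ‖u‖ ^ 2 / 2 + (u.re + 1 / 2) ^ 2 := by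
  have h_re : (phiCar u).re = 1 + u.re + (u.re ^ 2 - u.im ^ 2) / 2 := by simp [phiCar, sq]
  rw [h_re, ← sq_norm_sub_sq_re]
  ring

theorem three_quarters_sub_le_re_phiCar (u : ℂ) : 3 / 4 - ‖u‖ ^ 2 / 2 ≤ (phiCar u).re := by
  rw [re_phiCar]
  exact le_add_of_nonneg_right (sq_nonneg _)

theorem one_add_sq_div_two_le_re_phiCar {u : ℂ} (hu : ‖u‖ ≤ 1 / 2) :
    (1 + (1 - ‖u‖) ^ 2) / 2 ≤ (phiCar u).re := by
  have h_re : 1 / 2 - ‖u‖ ≤ u.re + 1 / 2 := by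
    linarith [neg_le_of_abs_le (abs_re_le_norm u)]
  calc (1 + (1 - ‖u‖) ^ 2) / 2 = 3 / 4 - ‖u‖ ^ 2 / 2 + (1 / 2 - ‖u‖) ^ 2 := by ring
    _ ≤ 3 / 4 - ‖u‖ ^ 2 / 2 + (u.re + 1 / 2) ^ 2 := by
      gcongr
    _ = (phiCar u).re := (re_phiCar u).symm

/-- The radius `s₁(α)` up to which the functions in `SCar` are starlike of order `α`. -/
noncomputable def carRadius (α : ℝ) : ℝ :=
  if α ≤ 1 / 4 then 1
  else if α ≤ 5 / 8 then Real.sqrt ((3 - 4 * α) / 2)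
  else 1 - Real.sqrt (2 * α - 1)

theorem carRadius_le_one (α : ℝ) : carRadius α ≤ 1 := by
  rw [carRadius]
  split_ifs with h_quarter
  · exact le_rfl
  · rw [Real.sqrt_le_one]
    linarith
  · exact sub_le_self 1 (Real.sqrt_nonneg _)

theorem lt_re_phiCar_of_norm_lt_carRadius {α : ℝ} {u : ℂ} (hu : ‖u‖ < carRadius α) :
    α < (phiCar u).re := by
  rw [carRadius] at hu
  split_ifs at hu with h_quarter h_five_eighths
  · have h_sq : ‖u‖ ^ 2 < 1 := pow_lt_one₀ (norm_nonneg u) hu two_ne_zero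
    linarith [three_quarters_sub_le_re_phiCar u]
  · have h_sq : ‖u‖ ^ 2 < (3 - 4 * α) / 2 := (Real.lt_sqrt (norm_nonneg u)).mp hu
    linarith [three_quarters_sub_le_re_phiCar u]
  · have h_half : 1 / 2 < √(2 * α - 1) := Real.lt_sqrt_of_sq_lt (by linarith)
    have h_sq : 2 * α - 1 < (1 - ‖u‖) ^ 2 := (Real.sqrt_lt' (by linarith)).mp (by linarith)
    linarith [one_add_sq_div_two_le_re_phiCar (u := u) (by linarith)]

theorem stmt_18 (f : ℂ → ℂ) (hf : SCar f) (α : ℝ) (hα0 : 0 ≤ α) (hα1 : α < 1)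
    (s : ℝ) (hs : s = if α ≤ 1 / 4 then 1
      else if α ≤ 5 / 8 then Real.sqrt ((3 - 4 * α) / 2)
      else 1 - Real.sqrt (2 * α - 1)) :
    ∀ z : ℂ, z ≠ 0 → ‖z‖ < s → α < (z * deriv f z / f z).re := by
  intro z hz0 hzs
  obtain rfl : s = carRadius α := hs
  obtain ⟨u, hu, hφu⟩ :=
    hf.mul_deriv_div_mem_image_phiCar (hzs.trans_le (carRadius_le_one α)) hz0
  rw [← hφu]
  exact lt_re_phiCar_of_norm_lt_carRadius ((mem_closedBall_zero_iff.mp hu).trans_lt hzs)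
end
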